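/- The non-conservative vector η_NC of the reformulated GLM-CGL system is pointwise annihilated by the entropy variables: for all C¹ fields as in the context, V · η_NC = 0 at every point, where η_NC ∈ ℝ¹⁰ has components (ordered as (ρ, ρv_x, ρv_y, ρv_z, p∥, E, B_x, B_y, B_z, Ψ)): 0 in the ρ-slot; Σ_{j∈{x,y}} ∂_j((p∥−p⊥) b_i b_j) in the ρv_i-slot for i ∈ {x,y,z}; 2p∥ Σ_{j∈{x,y}} Σ_{i∈{x,y,z}} b_j (∂_j v_i) b_i in the p∥-slot; Σ_{j∈{x,y}} ∂_j((p∥−p⊥)(v·b) b_j) in the E-slot; and 0 in the B_x, B_y, B_z, Ψ slots. -/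

import Mathlib

noncomputable section

/-- Partial derivative in the `t`-direction (first coordinate of `(t,x,y)`). -/
def pdt (f : ℝ × ℝ × ℝ → ℝ) (q : ℝ × ℝ × ℝ) : ℝ := fderiv ℝ f q (1, 0, 0)

/-- Partial derivative in the `x`-direction (second coordinate of `(t,x,y)`). -/
def pdx (f : ℝ × ℝ × ℝ → ℝ) (q : ℝ × ℝ × ℝ) : ℝ := fderiv ℝ f q (0, 1, 0)

/-- Partial derivative in the `y`-direction (third coordinate of `(t,x,y)`). -/
def pdy (f : ℝ × ℝ × ℝ → ℝ) (q : ℝ × ℝ × ℝ) : ℝ := fderiv ℝ f q (0, 0, 1)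

/-- The fields `(ρ, v, p∥, p⊥, B, Ψ)` of the GLM-CGL system, as functions of `(t,x,y)`. -/
structure GLMFields where
  ρ : ℝ × ℝ × ℝ → ℝ
  vx : ℝ × ℝ × ℝ → ℝ
  vy : ℝ × ℝ × ℝ → ℝ
  vz : ℝ × ℝ × ℝ → ℝ
  pl : ℝ × ℝ × ℝ → ℝ
  pp : ℝ × ℝ × ℝ → ℝ
  Bx : ℝ × ℝ × ℝ → ℝ
  By : ℝ × ℝ × ℝ → ℝ
  Bz : ℝ × ℝ × ℝ → ℝ
  Ψ : ℝ × ℝ × ℝ → ℝ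

namespace GLMFields

variable (F : GLMFields)

/-- `|B|`. -/
def normB (q : ℝ × ℝ × ℝ) : ℝ := Real.sqrt (F.Bx q ^ 2 + F.By q ^ 2 + F.Bz q ^ 2)

/-- `b_x = B_x/|B|`. -/
def bhx (q : ℝ × ℝ × ℝ) : ℝ := F.Bx q / F.normB q

/-- `b_y = B_y/|B|`. -/
def bhy (q : ℝ × ℝ × ℝ) : ℝ := F.By q / F.normB q

/-- `b_z = B_z/|B|`. -/
def bhz (q : ℝ × ℝ × ℝ) : ℝ := F.Bz q / F.normB q

/-- `p = (2p⊥ + p∥)/3`. -/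
def pavg (q : ℝ × ℝ × ℝ) : ℝ := (2 * F.pp q + F.pl q) / 3

/-- `e = ½(ρ|v|² + |B|² + 3p)`. -/
def eInt (q : ℝ × ℝ × ℝ) : ℝ :=
  (F.ρ q * (F.vx q ^ 2 + F.vy q ^ 2 + F.vz q ^ 2)
    + (F.Bx q ^ 2 + F.By q ^ 2 + F.Bz q ^ 2) + 3 * F.pavg q) / 2

/-- `E = e + ½Ψ²`. -/
def Etot (q : ℝ × ℝ × ℝ) : ℝ := F.eInt q + F.Ψ q ^ 2 / 2

/-- `s = ln(p∥ p⊥²/ρ⁵)`. -/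
def sEnt (q : ℝ × ℝ × ℝ) : ℝ := Real.log (F.pl q * F.pp q ^ 2 / F.ρ q ^ 5)

/-- The entropy `𝓔 = −ρ s`. -/
def ent (q : ℝ × ℝ × ℝ) : ℝ := -(F.ρ q) * F.sEnt q

/-- The entropy flux `q_x = v_x 𝓔`. -/
def entFx (q : ℝ × ℝ × ℝ) : ℝ := F.vx q * F.ent q

/-- The entropy flux `q_y = v_y 𝓔`. -/
def entFy (q : ℝ × ℝ × ℝ) : ℝ := F.vy q * F.ent q

/-- `v·B`. -/
def vdotB (q : ℝ × ℝ × ℝ) : ℝ :=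
  F.vx q * F.Bx q + F.vy q * F.By q + F.vz q * F.Bz q

/-- `v·b`. -/
def vdotb (q : ℝ × ℝ × ℝ) : ℝ :=
  F.vx q * F.bhx q + F.vy q * F.bhy q + F.vz q * F.bhz q

/-- All ten fields are `C¹` on `Ω`. -/
def IsC1On (Ω : Set (ℝ × ℝ × ℝ)) : Prop :=
  ContDiffOn ℝ 1 F.ρ Ω ∧ ContDiffOn ℝ 1 F.vx Ω ∧ ContDiffOn ℝ 1 F.vy Ω ∧
    ContDiffOn ℝ 1 F.vz Ω ∧ ContDiffOn ℝ 1 F.pl Ω ∧ ContDiffOn ℝ 1 F.pp Ω ∧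
    ContDiffOn ℝ 1 F.Bx Ω ∧ ContDiffOn ℝ 1 F.By Ω ∧ ContDiffOn ℝ 1 F.Bz Ω ∧
    ContDiffOn ℝ 1 F.Ψ Ω

/-- `ρ > 0`, `p∥ > 0`, `p⊥ > 0` and `|B| > 0` on `Ω`. -/
def Admissible (Ω : Set (ℝ × ℝ × ℝ)) : Prop :=
  ∀ q ∈ Ω, 0 < F.ρ q ∧ 0 < F.pl q ∧ 0 < F.pp q ∧ 0 < F.normB q

end GLMFields

/-- The two-dimensional GLM-CGL system (sums over `j ∈ {x,y}`, `i ∈ {x,y,z}`)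
holds at every point of `Ω`. -/
def GLMSystem (ch : ℝ) (F : GLMFields) (Ω : Set (ℝ × ℝ × ℝ)) : Prop :=
  ∀ q ∈ Ω,
    -- mass: ∂_tρ + Σ_j ∂_j(ρv_j) = 0
    (pdt F.ρ q + pdx (fun r => F.ρ r * F.vx r) q + pdy (fun r => F.ρ r * F.vy r) q = 0) ∧
    -- momentum, i = x
    (pdt (fun r => F.ρ r * F.vx r) q
      + pdx (fun r => F.ρ r * F.vx r * F.vx r + (F.pp r + F.normB r ^ 2 / 2)
          + (F.pl r - F.pp r) * F.bhx r * F.bhx r - F.Bx r * F.Bx r) q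
      + pdy (fun r => F.ρ r * F.vy r * F.vx r
          + (F.pl r - F.pp r) * F.bhx r * F.bhy r - F.Bx r * F.By r) q = 0) ∧
    -- momentum, i = y
    (pdt (fun r => F.ρ r * F.vy r) q
      + pdx (fun r => F.ρ r * F.vx r * F.vy r
          + (F.pl r - F.pp r) * F.bhy r * F.bhx r - F.By r * F.Bx r) q
      + pdy (fun r => F.ρ r * F.vy r * F.vy r + (F.pp r + F.normB r ^ 2 / 2)
          + (F.pl r - F.pp r) * F.bhy r * F.bhy r - F.By r * F.By r) q = 0) ∧
    -- momentum, i = z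
    (pdt (fun r => F.ρ r * F.vz r) q
      + pdx (fun r => F.ρ r * F.vx r * F.vz r
          + (F.pl r - F.pp r) * F.bhz r * F.bhx r - F.Bz r * F.Bx r) q
      + pdy (fun r => F.ρ r * F.vy r * F.vz r
          + (F.pl r - F.pp r) * F.bhz r * F.bhy r - F.Bz r * F.By r) q = 0) ∧
    -- parallel pressure
    (pdt F.pl q + pdx (fun r => F.pl r * F.vx r) q + pdy (fun r => F.pl r * F.vy r) q
      = -(2 * F.pl q) *
          (F.bhx q * pdx F.vx q * F.bhx q + F.bhx q * pdx F.vy q * F.bhy q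
            + F.bhx q * pdx F.vz q * F.bhz q
            + F.bhy q * pdy F.vx q * F.bhx q + F.bhy q * pdy F.vy q * F.bhy q
            + F.bhy q * pdy F.vz q * F.bhz q)) ∧
    -- total energy
    (pdt F.Etot q
      + pdx (fun r => F.vx r * (F.eInt r + F.pp r + F.normB r ^ 2 / 2)
          + (F.pl r - F.pp r) * F.vdotb r * F.bhx r - F.vdotB r * F.Bx r
          + ch * F.Ψ r * F.Bx r) q
      + pdy (fun r => F.vy r * (F.eInt r + F.pp r + F.normB r ^ 2 / 2)
          + (F.pl r - F.pp r) * F.vdotb r * F.bhy r - F.vdotB r * F.By r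
          + ch * F.Ψ r * F.By r) q
      + F.Ψ q * (F.vx q * pdx F.Ψ q + F.vy q * pdy F.Ψ q) = 0) ∧
    -- magnetic field, i = x
    (pdt F.Bx q + pdx (fun r => F.vx r * F.Bx r - F.Bx r * F.vx r + ch * F.Ψ r) q
      + pdy (fun r => F.vy r * F.Bx r - F.By r * F.vx r) q = 0) ∧
    -- magnetic field, i = y
    (pdt F.By q + pdx (fun r => F.vx r * F.By r - F.Bx r * F.vy r) q
      + pdy (fun r => F.vy r * F.By r - F.By r * F.vy r + ch * F.Ψ r) q = 0) ∧
    -- magnetic field, i = z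
    (pdt F.Bz q + pdx (fun r => F.vx r * F.Bz r - F.Bx r * F.vz r) q
      + pdy (fun r => F.vy r * F.Bz r - F.By r * F.vz r) q = 0) ∧
    -- GLM variable Ψ
    (pdt F.Ψ q + ch * (pdx F.Bx q + pdy F.By q)
      + (F.vx q * pdx F.Ψ q + F.vy q * pdy F.Ψ q) = 0)

/-!
The momentum slots of `η_NC` are the divergence of the stress `T = (p∥ − p⊥) b ⊗ b` and its energy
slot is the divergence of `vT`. Since `∇·(vT) = v·(∇·T) + ∇v : T`, the velocity and energy entropy
variables together pick out only `−2β⊥ ∇v : T = −2β⊥ (p∥ − p⊥) S`, where `S` is the rate of strain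
along `b`. The parallel pressure slot contributes `2p∥ (β⊥ − β∥) S`, and the two cancel because
`β⊥ p⊥ = ρ = β∥ p∥`.
-/

section StressCalculus

open scoped Matrix

variable {𝕜 E ι κ : Type*} [NontriviallyNormedField 𝕜] [NormedAddCommGroup E] [NormedSpace 𝕜 E]
  [Fintype ι] [Fintype κ]

/-- The divergence `Σ_j ∂_{d j} w_j` of the components `w_j` along the directions `d j`. The
directions need not span `E`: the two-dimensional system differentiates along `x` and `y` only. -/
def divAlong (d : κ → E) (w : E → κ → 𝕜) (q : E) : 𝕜 :=
  ∑ j, fderiv 𝕜 (fun r => w r j) q (d j)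

/-- The velocity gradient contracted with `b` and `c`, i.e. `Σ_j Σ_i c_j (∂_{d j} v_i) b_i`. When
`b` is a unit field and `c` its components along the directions `d`, this is the rate of strain
along `b`. -/
def strainRate (d : κ → E) (v : E → ι → 𝕜) (b : ι → 𝕜) (c : κ → 𝕜) (q : E) : 𝕜 :=
  ∑ j, ∑ i, c j * fderiv 𝕜 (fun r => v r i) q (d j) * b i

theorem fderiv_dotProduct_apply {v w : E → ι → 𝕜} {q : E} (hv : DifferentiableAt 𝕜 v q)
    (hw : DifferentiableAt 𝕜 w q) (e : E) :
    fderiv 𝕜 (fun r => v r ⬝ᵥ w r) q e =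
      (∑ i, v q i * fderiv 𝕜 (fun r => w r i) q e) +
        ∑ i, fderiv 𝕜 (fun r => v r i) q e * w q i := by
  rw [differentiableAt_pi] at hv hw
  simp only [dotProduct]
  rw [fderiv_fun_sum fun i _ => (hv i).fun_mul (hw i), ← Finset.sum_add_distrib]
  simp [fderiv_fun_mul (hv _) (hw _), mul_comm]

theorem divAlong_vecMul (d : κ → E) {v : E → ι → 𝕜} {T : E → Matrix ι κ 𝕜} {q : E}
    (hv : DifferentiableAt 𝕜 v q) (hT : ∀ i j, DifferentiableAt 𝕜 (fun r => T r i j) q) :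
    divAlong d (fun r => v r ᵥ* T r) q =
      (v q ⬝ᵥ fun i => divAlong d (fun r => T r i) q) +
        ∑ j, ∑ i, fderiv 𝕜 (fun r => v r i) q (d j) * T q i j := by
  have leibniz (j : κ) := fderiv_dotProduct_apply hv
    (w := fun r i => T r i j) (differentiableAt_pi.2 fun i => hT i j) (d j)
  simp only [divAlong, Matrix.vecMul, leibniz, Finset.sum_add_distrib]
  simp only [dotProduct, Finset.mul_sum]
  rw [Finset.sum_comm]

theorem divAlong_vecMul_anisotropic (d : κ → E) {v b : E → ι → 𝕜} {c : E → κ → 𝕜} {a : E → 𝕜}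
    {q : E} (hv : DifferentiableAt 𝕜 v q) (ha : DifferentiableAt 𝕜 a q)
    (hb : DifferentiableAt 𝕜 b q) (hc : DifferentiableAt 𝕜 c q) :
    divAlong d (fun r => v r ᵥ* Matrix.of fun i j => a r * b r i * c r j) q =
      (v q ⬝ᵥ fun i => divAlong d (fun r j => a r * b r i * c r j) q) +
        a q * strainRate d v (b q) (c q) q := by
  have hT (i : ι) (j : κ) : DifferentiableAt 𝕜 (fun r => a r * b r i * c r j) q :=
    (ha.mul (differentiableAt_pi.1 hb i)).mul (differentiableAt_pi.1 hc j)
  refine (divAlong_vecMul d (T := fun r => Matrix.of fun i j => a r * b r i * c r j) hv hT).trans ?_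
  congr 1
  simp only [strainRate, Finset.mul_sum, Matrix.of_apply]
  exact Finset.sum_congr rfl fun j _ => Finset.sum_congr rfl fun i _ => by ring

end StressCalculus

/-- The divergence in the `(x,y)`-plane. -/
def planeDiv (w : ℝ × ℝ × ℝ → Fin 2 → ℝ) (q : ℝ × ℝ × ℝ) : ℝ :=
  pdx (fun r => w r 0) q + pdy (fun r => w r 1) q

theorem planeDiv_eq_divAlong (w : ℝ × ℝ × ℝ → Fin 2 → ℝ) (q : ℝ × ℝ × ℝ) :
    planeDiv w q = divAlong ![(0, 1, 0), (0, 0, 1)] w q := by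
  simp [planeDiv, divAlong, pdx, pdy, Fin.sum_univ_two]

namespace GLMFields

open scoped Matrix Topology

variable (F : GLMFields)

/-- The velocity `v`. -/
def vel (q : ℝ × ℝ × ℝ) : Fin 3 → ℝ := ![F.vx q, F.vy q, F.vz q]

/-- The magnetic field `B`. -/
def mag (q : ℝ × ℝ × ℝ) : Fin 3 → ℝ := ![F.Bx q, F.By q, F.Bz q]

/-- The unit field `b = B/|B|`. -/
def bh (q : ℝ × ℝ × ℝ) : Fin 3 → ℝ := ![F.bhx q, F.bhy q, F.bhz q]

/-- The anisotropic stress `(p∥ − p⊥) b_i b_j`, with `i ∈ {x,y,z}` and `j ∈ {x,y}`, as the fields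
do not depend on `z`. -/
def stress (q : ℝ × ℝ × ℝ) : Matrix (Fin 3) (Fin 2) ℝ :=
  Matrix.of fun i j => (F.pl q - F.pp q) * F.bh q i * F.bh q j.castSucc

/-- The energy flux `(p∥ − p⊥)(v·b) b_j` of the anisotropic stress, with `j ∈ {x,y}`. -/
def stressFlux (q : ℝ × ℝ × ℝ) (j : Fin 2) : ℝ :=
  (F.pl q - F.pp q) * F.vdotb q * F.bh q j.castSucc

/-- The rate of strain `Σ_j Σ_i b_j (∂_j v_i) b_i` along the magnetic field, with `j ∈ {x,y}` and
`i ∈ {x,y,z}`. -/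
def parallelStrain (q : ℝ × ℝ × ℝ) : ℝ :=
  F.bhx q * pdx F.vx q * F.bhx q + F.bhx q * pdx F.vy q * F.bhy q
    + F.bhx q * pdx F.vz q * F.bhz q
    + F.bhy q * pdy F.vx q * F.bhx q + F.bhy q * pdy F.vy q * F.bhy q
    + F.bhy q * pdy F.vz q * F.bhz q

/-- The entropy variables `V`, with `β⊥ = ρ/p⊥` and `β∥ = ρ/p∥`. -/
def entropyVars (q : ℝ × ℝ × ℝ) : Fin 10 → ℝ :=
  ![5 - F.sEnt q - (F.ρ q / F.pp q) * (F.vx q ^ 2 + F.vy q ^ 2 + F.vz q ^ 2),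
    2 * (F.ρ q / F.pp q) * F.vx q,
    2 * (F.ρ q / F.pp q) * F.vy q,
    2 * (F.ρ q / F.pp q) * F.vz q,
    (F.ρ q / F.pp q) - (F.ρ q / F.pl q),
    -(2 * (F.ρ q / F.pp q)),
    2 * (F.ρ q / F.pp q) * F.Bx q,
    2 * (F.ρ q / F.pp q) * F.By q,
    2 * (F.ρ q / F.pp q) * F.Bz q,
    2 * (F.ρ q / F.pp q) * F.Ψ q]

/-- The non-conservative vector `η_NC` of the reformulated GLM-CGL system. -/
def nonconservative (q : ℝ × ℝ × ℝ) : Fin 10 → ℝ :=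
  ![0, planeDiv (fun r => F.stress r 0) q, planeDiv (fun r => F.stress r 1) q,
    planeDiv (fun r => F.stress r 2) q, 2 * F.pl q * F.parallelStrain q,
    planeDiv F.stressFlux q, 0, 0, 0, 0]

theorem vel_vecMul_stress (q : ℝ × ℝ × ℝ) :
    F.vel q ᵥ* F.stress q = F.stressFlux q := by
  ext j
  simp only [Matrix.vecMul, dotProduct, Fin.sum_univ_three, vel, stress, stressFlux, vdotb, bh,
    Matrix.of_apply, Matrix.cons_val]
  ring

theorem parallelStrain_eq_strainRate (q : ℝ × ℝ × ℝ) :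
    F.parallelStrain q = strainRate ![(0, 1, 0), (0, 0, 1)] F.vel (F.bh q)
      (fun j => F.bh q j.castSucc) q := by
  simp only [parallelStrain, strainRate, vel, bh, pdx, pdy, Fin.sum_univ_two,
    Fin.sum_univ_three, Matrix.cons_val, Fin.castSucc_zero, Fin.castSucc_one]
  ring

theorem bh_eq_mag_div_normB (q : ℝ × ℝ × ℝ) (i : Fin 3) :
    F.bh q i = F.mag q i / F.normB q := by
  fin_cases i <;> rfl

theorem entropyVars_dotProduct_nonconservative (q : ℝ × ℝ × ℝ) :
    F.entropyVars q ⬝ᵥ F.nonconservative q =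
      2 * (F.ρ q / F.pp q) *
          ((F.vel q ⬝ᵥ fun i => planeDiv (fun r => F.stress r i) q) - planeDiv F.stressFlux q) +
        (F.ρ q / F.pp q - F.ρ q / F.pl q) * (2 * F.pl q * F.parallelStrain q) := by
  simp only [entropyVars, nonconservative, Matrix.cons_dotProduct_cons,
    Matrix.dotProduct_of_isEmpty]
  simp only [vel, dotProduct, Fin.sum_univ_three, Matrix.cons_val]
  ring

variable {F} {q : ℝ × ℝ × ℝ}

theorem differentiableAt_normB (hmag : DifferentiableAt ℝ F.mag q) (hB : F.normB q ≠ 0) :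
    DifferentiableAt ℝ F.normB q := by
  have h := differentiableAt_pi.1 hmag
  exact (((h 0).fun_pow 2).fun_add ((h 1).fun_pow 2) |>.fun_add ((h 2).fun_pow 2)).sqrt
    (Real.sqrt_ne_zero'.1 hB).ne'

theorem differentiableAt_bh (hmag : DifferentiableAt ℝ F.mag q) (hB : F.normB q ≠ 0) :
    DifferentiableAt ℝ F.bh q := by
  have hN := differentiableAt_normB hmag hB
  refine differentiableAt_pi.2 fun i => ?_
  simp only [bh_eq_mag_div_normB]
  fun_prop (disch := exact hB)

theorem planeDiv_stressFlux (hv : DifferentiableAt ℝ F.vel q)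
    (hp : DifferentiableAt ℝ (fun r => F.pl r - F.pp r) q) (hb : DifferentiableAt ℝ F.bh q) :
    planeDiv F.stressFlux q =
      (F.vel q ⬝ᵥ fun i => planeDiv (fun r => F.stress r i) q) +
        (F.pl q - F.pp q) * F.parallelStrain q := by
  simp only [← funext (vel_vecMul_stress F), planeDiv_eq_divAlong, parallelStrain_eq_strainRate]
  exact divAlong_vecMul_anisotropic _ hv hp hb
    (differentiableAt_pi.2 fun j => differentiableAt_pi.1 hb j.castSucc)

theorem IsC1On.differentiableAt_vel {Ω : Set (ℝ × ℝ × ℝ)} (hF : F.IsC1On Ω) (hΩ : Ω ∈ 𝓝 q) :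
    DifferentiableAt ℝ F.vel q := by
  obtain ⟨-, hvx, hvy, hvz, -⟩ := hF
  exact ((contDiffAt_pi (Φ := F.vel)).2 <| Fin.forall_fin_succ.2 ⟨hvx.contDiffAt hΩ,
    Fin.forall_fin_two.2 ⟨hvy.contDiffAt hΩ, hvz.contDiffAt hΩ⟩⟩).differentiableAt one_ne_zero

theorem IsC1On.differentiableAt_mag {Ω : Set (ℝ × ℝ × ℝ)} (hF : F.IsC1On Ω) (hΩ : Ω ∈ 𝓝 q) :
    DifferentiableAt ℝ F.mag q := by
  obtain ⟨-, -, -, -, -, -, hBx, hBy, hBz, -⟩ := hF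
  exact ((contDiffAt_pi (Φ := F.mag)).2 <| Fin.forall_fin_succ.2 ⟨hBx.contDiffAt hΩ,
    Fin.forall_fin_two.2 ⟨hBy.contDiffAt hΩ, hBz.contDiffAt hΩ⟩⟩).differentiableAt one_ne_zero

theorem IsC1On.differentiableAt_pl_sub_pp {Ω : Set (ℝ × ℝ × ℝ)} (hF : F.IsC1On Ω)
    (hΩ : Ω ∈ 𝓝 q) : DifferentiableAt ℝ (fun r => F.pl r - F.pp r) q := by
  obtain ⟨-, -, -, -, hpl, hpp, -⟩ := hF
  exact ((hpl.contDiffAt hΩ).sub (hpp.contDiffAt hΩ)).differentiableAt one_ne_zero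

end GLMFields

theorem glm_cgl_nonconservative_annihilated_general {F : GLMFields} {q : ℝ × ℝ × ℝ}
    (hv : DifferentiableAt ℝ F.vel q) (hp : DifferentiableAt ℝ (fun r => F.pl r - F.pp r) q)
    (hmag : DifferentiableAt ℝ F.mag q) (hpl : F.pl q ≠ 0) (hpp : F.pp q ≠ 0)
    (hB : F.normB q ≠ 0) :
    F.entropyVars q ⬝ᵥ F.nonconservative q = 0 := by
  have stress_work := GLMFields.planeDiv_stressFlux hv hp (GLMFields.differentiableAt_bh hmag hB)
  have beta_balance :
      F.ρ q / F.pp q * (F.pl q - F.pp q) = (F.ρ q / F.pp q - F.ρ q / F.pl q) * F.pl q := by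
    field_simp
  rw [F.entropyVars_dotProduct_nonconservative, stress_work]
  linear_combination -2 * F.parallelStrain q * beta_balance

/-- the non-conservative vector `η_NC` of the reformulated GLM-CGL
system is pointwise annihilated by the entropy variables: `V · η_NC = 0` on `Ω`. -/
theorem glm_cgl_nonconservative_annihilated
    (F : GLMFields) (Ω : Set (ℝ × ℝ × ℝ)) (hΩ : IsOpen Ω)
    (hreg : F.IsC1On Ω) (hadm : F.Admissible Ω) :
    ∀ q ∈ Ω,
      (∑ k : Fin 10,
        (![5 - F.sEnt q - (F.ρ q / F.pp q) * (F.vx q ^ 2 + F.vy q ^ 2 + F.vz q ^ 2),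
            2 * (F.ρ q / F.pp q) * F.vx q,
            2 * (F.ρ q / F.pp q) * F.vy q,
            2 * (F.ρ q / F.pp q) * F.vz q,
            (F.ρ q / F.pp q) - (F.ρ q / F.pl q),
            -(2 * (F.ρ q / F.pp q)),
            2 * (F.ρ q / F.pp q) * F.Bx q,
            2 * (F.ρ q / F.pp q) * F.By q,
            2 * (F.ρ q / F.pp q) * F.Bz q,
            2 * (F.ρ q / F.pp q) * F.Ψ q] k)
        * (![(0 : ℝ),
            -- ρv_x-slot: Σ_j ∂_j((p∥−p⊥) b_x b_j)
            pdx (fun r => (F.pl r - F.pp r) * F.bhx r * F.bhx r) q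
              + pdy (fun r => (F.pl r - F.pp r) * F.bhx r * F.bhy r) q,
            -- ρv_y-slot
            pdx (fun r => (F.pl r - F.pp r) * F.bhy r * F.bhx r) q
              + pdy (fun r => (F.pl r - F.pp r) * F.bhy r * F.bhy r) q,
            -- ρv_z-slot
            pdx (fun r => (F.pl r - F.pp r) * F.bhz r * F.bhx r) q
              + pdy (fun r => (F.pl r - F.pp r) * F.bhz r * F.bhy r) q,
            -- p∥-slot: 2p∥ Σ_j Σ_i b_j (∂_j v_i) b_i
            2 * F.pl q *
              (F.bhx q * pdx F.vx q * F.bhx q + F.bhx q * pdx F.vy q * F.bhy q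
                + F.bhx q * pdx F.vz q * F.bhz q
                + F.bhy q * pdy F.vx q * F.bhx q + F.bhy q * pdy F.vy q * F.bhy q
                + F.bhy q * pdy F.vz q * F.bhz q),
            -- E-slot: Σ_j ∂_j((p∥−p⊥)(v·b) b_j)
            pdx (fun r => (F.pl r - F.pp r) * F.vdotb r * F.bhx r) q
              + pdy (fun r => (F.pl r - F.pp r) * F.vdotb r * F.bhy r) q,
            0, 0, 0, 0] k))
      = 0 := fun q hq =>
  have ⟨_, hpl, hpp, hB⟩ := hadm q hq
  -- the two displayed vectors are `F.entropyVars q` and `F.nonconservative q` definitionally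
  glm_cgl_nonconservative_annihilated_general (hreg.differentiableAt_vel (hΩ.mem_nhds hq))
    (hreg.differentiableAt_pl_sub_pp (hΩ.mem_nhds hq))
    (hreg.differentiableAt_mag (hΩ.mem_nhds hq)) hpl.ne' hpp.ne' hB.ne'

end
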